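/- arXiv:2002.03459 — 3 statements merged into one kernel-verified Lean document; each statement's English description precedes it below -/
import Mathlib

section
/- Let d ≥ 1, k ≥ 0, m = d·2^k, and ε ∈ (0,1). Let x ∈ ℝ^m and partition x into 2^k consecutive blocks v⁽⁰⁾₁, …, v⁽⁰⁾_{2^k} ∈ ℝ^d, where v⁽⁰⁾ⱼ = (x_{d(j−1)+1}, …, x_{dj}). Let φ₁, …, φ_k : ℝ^d × ℝ^d → ℝ^d be linear maps, and define recursively v⁽ⁱ⁾ⱼ = φᵢ(v⁽ⁱ⁻¹⁾_{2j−1}, v⁽ⁱ⁻¹⁾_{2j}) for 1 ≤ i ≤ k and 1 ≤ j ≤ 2^{k−i}. Suppose that for every 1 ≤ i ≤ k and 1 ≤ j ≤ 2^{k−i}, (1−ε)·(‖v⁽ⁱ⁻¹⁾_{2j−1}‖² + ‖v⁽ⁱ⁻¹⁾_{2j}‖²) ≤ ‖v⁽ⁱ⁾ⱼ‖² ≤ (1+ε)·(‖v⁽ⁱ⁻¹⁾_{2j−1}‖² + ‖v⁽ⁱ⁻¹⁾_{2j}‖²). Then the output v = v⁽ᵏ⁾₁ satisfies (1−ε)^k·‖x‖²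 ≤ ‖v‖² ≤ (1+ε)^k·‖x‖². Moreover, the map x ↦ v⁽ᵏ⁾₁ is a linear map from ℝ^m to ℝ^d. -/
/-!
Each node `v⁽ⁱ⁾ⱼ` of the compression tree depends on `2^i` consecutive `d`-blocks of `x`, and
its squared norm is within factors `(1-ε)^i` and `(1+ε)^i` of the energy of that stretch
(`slevel_bounds`): going up one level adds the energies of the two children and costs one more
factor `1 ± ε`, where `1 - ε ≥ 0` is needed to multiply the lower bounds. The root is the node
with `i = k`, `j = 1`, whose stretch is all of `x`. Linearity holds at every node by induction on
the level (`slevel_linear`).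
-/

/-- The squared Euclidean (ℓ₂) norm of a vector in `ℝ^d`. -/
def enormSq {d : ℕ} (v : Fin d → ℝ) : ℝ := ∑ r, (v r) ^ 2

/-- The levels of the `SingleSketch` recursion: `slevel d φ x 0 j` is the `j`-th consecutive
`d`-block `(x_{d(j−1)+1}, …, x_{dj})` of the input `x` (1-indexed), and
`slevel d φ x i j = φᵢ(v⁽ⁱ⁻¹⁾_{2j−1}, v⁽ⁱ⁻¹⁾_{2j})`. -/
def slevel (d : ℕ) (φ : ℕ → ((Fin d → ℝ) × (Fin d → ℝ)) →ₗ[ℝ] (Fin d → ℝ))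
    (x : ℕ → ℝ) : ℕ → ℕ → Fin d → ℝ
  | 0, j => fun r => x (d * (j - 1) + (r : ℕ) + 1)
  | i + 1, j => φ (i + 1) (slevel d φ x i (2 * j - 1), slevel d φ x i (2 * j))

theorem slevel_linear (d : ℕ) (φ : ℕ → ((Fin d → ℝ) × (Fin d → ℝ)) →ₗ[ℝ] (Fin d → ℝ))
    (y z : ℕ → ℝ) (a b : ℝ) (i : ℕ) : ∀ j : ℕ,
    slevel d φ (fun t => a * y t + b * z t) i j =
      a • slevel d φ y i j + b • slevel d φ z i j := by
  induction i with
  | zero =>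
    intro j
    ext r
    simp [slevel]
  | succ i ih =>
    intro j
    simp only [slevel, ih, ← map_smul, ← map_add, Prod.smul_mk, Prod.mk_add_mk]

/-- The energy of the input below node `j + 1` of level `i` (nodes are numbered from `1`). -/
def stretchSq (d : ℕ) (x : ℕ → ℝ) (i j : ℕ) : ℝ :=
  ∑ t ∈ Finset.range (d * 2 ^ i), x (d * 2 ^ i * j + t + 1) ^ 2

theorem stretchSq_succ (d : ℕ) (x : ℕ → ℝ) (i j : ℕ) :
    stretchSq d x (i + 1) j = stretchSq d x i (2 * j) + stretchSq d x i (2 * j + 1) := by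
  unfold stretchSq
  rw [show d * 2 ^ (i + 1) = d * 2 ^ i + d * 2 ^ i by ring, Finset.sum_range_add]
  congr 1 <;> refine Finset.sum_congr rfl fun t _ => ?_ <;> congr 2 <;> ring

theorem slevel_bounds (d k : ℕ) (ε : ℝ) (hε0 : 0 < ε) (hε1 : ε < 1)
    (φ : ℕ → ((Fin d → ℝ) × (Fin d → ℝ)) →ₗ[ℝ] (Fin d → ℝ)) (x : ℕ → ℝ)
    (happrox : ∀ i ∈ Finset.Icc 1 k, ∀ j ∈ Finset.Icc 1 (2 ^ (k - i)),
      (1 - ε) * (enormSq (slevel d φ x (i - 1) (2 * j - 1)) +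
          enormSq (slevel d φ x (i - 1) (2 * j))) ≤ enormSq (slevel d φ x i j) ∧
      enormSq (slevel d φ x i j) ≤
        (1 + ε) * (enormSq (slevel d φ x (i - 1) (2 * j - 1)) +
          enormSq (slevel d φ x (i - 1) (2 * j)))) (i : ℕ) :
    i ≤ k → ∀ j < 2 ^ (k - i),
      (1 - ε) ^ i * stretchSq d x i j ≤ enormSq (slevel d φ x i (j + 1)) ∧
      enormSq (slevel d φ x i (j + 1)) ≤ (1 + ε) ^ i * stretchSq d x i j := by
  induction i with
  | zero =>
    intro _ j _
    have h : enormSq (slevel d φ x 0 (j + 1)) = stretchSq d x 0 j := by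
      simp [enormSq, slevel, stretchSq, Finset.sum_range]
    simp [h]
  | succ i ih =>
    intro hi j hj
    have hpow : 2 ^ (k - i) = 2 * 2 ^ (k - (i + 1)) := by
      rw [← pow_succ']
      congr 1
      omega
    obtain ⟨hl, hu⟩ := happrox (i + 1) (Finset.mem_Icc.2 ⟨by omega, hi⟩) (j + 1)
      (Finset.mem_Icc.2 ⟨by omega, hj⟩)
    obtain ⟨hl₁, hu₁⟩ := ih (by omega) (2 * j) (by omega)
    obtain ⟨hl₂, hu₂⟩ := ih (by omega) (2 * j + 1) (by omega)
    rw [Nat.add_sub_cancel, show 2 * (j + 1) - 1 = 2 * j + 1 by omega,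
      show 2 * (j + 1) = 2 * j + 1 + 1 by ring] at hl hu
    rw [stretchSq_succ]
    constructor
    · refine le_trans ?_ hl
      rw [pow_succ', mul_assoc, mul_add]
      exact mul_le_mul_of_nonneg_left (add_le_add hl₁ hl₂) (by linarith)
    · refine hu.trans ?_
      rw [pow_succ', mul_assoc, mul_add ((1 + ε) ^ i)]
      exact mul_le_mul_of_nonneg_left (add_le_add hu₁ hu₂) (by linarith)

/-- **Correctness of `SingleSketch` (Theorem 4).** If each application of a linear map `φᵢ`
in the binary compression tree preserves the sum of squared norms of its two arguments up to a
`(1±ε)` factor, then the output `v = v⁽ᵏ⁾₁` satisfies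
`(1−ε)^k·‖x‖² ≤ ‖v‖² ≤ (1+ε)^k·‖x‖²`, where `‖x‖² = ∑_{i=1}^{d·2^k} xᵢ²`.
Moreover the map `x ↦ v⁽ᵏ⁾₁` is linear. -/
theorem singleSketch_correct (d k : ℕ) (hd : 1 ≤ d) (ε : ℝ) (hε0 : 0 < ε) (hε1 : ε < 1)
    (φ : ℕ → ((Fin d → ℝ) × (Fin d → ℝ)) →ₗ[ℝ] (Fin d → ℝ)) (x : ℕ → ℝ)
    (happrox : ∀ i ∈ Finset.Icc 1 k, ∀ j ∈ Finset.Icc 1 (2 ^ (k - i)),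
      (1 - ε) * (enormSq (slevel d φ x (i - 1) (2 * j - 1)) +
          enormSq (slevel d φ x (i - 1) (2 * j))) ≤ enormSq (slevel d φ x i j) ∧
      enormSq (slevel d φ x i j) ≤
        (1 + ε) * (enormSq (slevel d φ x (i - 1) (2 * j - 1)) +
          enormSq (slevel d φ x (i - 1) (2 * j)))) :
    ((1 - ε) ^ k * (∑ i ∈ Finset.range (d * 2 ^ k), x (i + 1) ^ 2) ≤
        enormSq (slevel d φ x k 1) ∧
      enormSq (slevel d φ x k 1) ≤
        (1 + ε) ^ k * (∑ i ∈ Finset.range (d * 2 ^ k), x (i + 1) ^ 2)) ∧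
    (∀ (y z : ℕ → ℝ) (a b : ℝ),
      slevel d φ (fun i => a * y i + b * z i) k 1 =
        a • slevel d φ y k 1 + b • slevel d φ z k 1) := by
  refine ⟨?_, fun y z a b => slevel_linear d φ y z a b k 1⟩
  simpa [stretchSq] using
    slevel_bounds d k ε hε0 hε1 φ x happrox k le_rfl 0 (by simp)
end

section
/- Let d ≥ 1, k ≥ 0, m = d·2^k, and let n be divisible by d with n ≥ m; set t = (n−m)/d + 1. Let x ∈ ℝ^n and for 1 ≤ j ≤ t let yⱼ = (x_{1+(j−1)d}, …, x_{m+(j−1)d}) ∈ ℝ^m be the m-subword of x starting at position 1+(j−1)d. Partition x into blocks v⁽⁰⁾ⱼ = (x_{d(j−1)+1}, …, x_{dj}) ∈ ℝ^d, let ε ∈ (0,1), let φ₁, …, φ_k : ℝ^d × ℝ^d → ℝ^d be linear maps, define recursively v⁽ⁱ⁾ⱼ = φᵢ(v⁽ⁱ⁻¹⁾ⱼ, v⁽ⁱ⁻¹⁾_{j+2^{i−1}}), and suppose that every such application satisfies (1−ε)·(‖v⁽ⁱ⁻¹⁾ⱼ‖² + ‖v⁽ⁱ⁻¹⁾_{j+2^{i−1}}‖²)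 ≤ ‖v⁽ⁱ⁾ⱼ‖² ≤ (1+ε)·(‖v⁽ⁱ⁻¹⁾ⱼ‖² + ‖v⁽ⁱ⁻¹⁾_{j+2^{i−1}}‖²). Then for every 1 ≤ j ≤ t, the output vⱼ = v⁽ᵏ⁾ⱼ satisfies (1−ε)^k·‖yⱼ‖² ≤ ‖vⱼ‖² ≤ (1+ε)^k·‖yⱼ‖². -/
/-- The levels of the `AllSketch` recursion: `alevel d φ x 0 j` is the `j`-th consecutive
`d`-block `(x_{d(j−1)+1}, …, x_{dj})` of the input `x` (1-indexed), and
`alevel d φ x i j = φᵢ(v⁽ⁱ⁻¹⁾ⱼ, v⁽ⁱ⁻¹⁾_{j+2^{i−1}})`. -/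
def alevel (d : ℕ) (φ : ℕ → ((Fin d → ℝ) × (Fin d → ℝ)) →ₗ[ℝ] (Fin d → ℝ))
    (x : ℕ → ℝ) : ℕ → ℕ → Fin d → ℝ
  | 0, j => fun r => x (d * (j - 1) + (r : ℕ) + 1)
  | i + 1, j => φ (i + 1) (alevel d φ x i j, alevel d φ x i (j + 2 ^ i))

/-- The squared norm of the subword of `x` formed by the `2 ^ i` consecutive `d`-blocks starting
with block `j` (1-indexed). -/
def windowSq (d : ℕ) (x : ℕ → ℝ) (i j : ℕ) : ℝ :=
  ∑ r ∈ Finset.range (d * 2 ^ i), x ((j - 1) * d + r + 1) ^ 2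

lemma enormSq_alevel_zero (d : ℕ) (φ : ℕ → ((Fin d → ℝ) × (Fin d → ℝ)) →ₗ[ℝ] (Fin d → ℝ))
    (x : ℕ → ℝ) (j : ℕ) : enormSq (alevel d φ x 0 j) = windowSq d x 0 j := by
  rw [windowSq, pow_zero, mul_one, Finset.sum_range]
  simp only [enormSq, alevel, mul_comm d]

/-- A window at level `i + 1` is the concatenation of two adjacent windows at level `i`. The
condition `1 ≤ j` keeps the truncated subtraction `j - 1` honest. -/
lemma windowSq_succ (d : ℕ) (x : ℕ → ℝ) (i j : ℕ) (hj : 1 ≤ j) :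
    windowSq d x (i + 1) j = windowSq d x i j + windowSq d x i (j + 2 ^ i) := by
  obtain ⟨j, rfl⟩ := Nat.exists_eq_add_of_le' hj
  have h : d * 2 ^ (i + 1) = d * 2 ^ i + d * 2 ^ i := by ring
  have h' : j + 1 + 2 ^ i - 1 = j + 2 ^ i := by rw [Nat.add_right_comm, Nat.add_sub_cancel]
  simp only [windowSq, h, h', Finset.sum_range_add, Nat.add_sub_cancel]
  congr 1
  refine Finset.sum_congr rfl fun r _ => ?_
  congr 2
  ring

/-- The guarantee at every level `i`, for every position `j` whose window
`j, …, j + 2 ^ i - 1` stays within the `N` blocks of the input. -/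
lemma alevel_bounds (d k N : ℕ) (ε : ℝ) (hε0 : 0 < ε) (hε1 : ε < 1)
    (φ : ℕ → ((Fin d → ℝ) × (Fin d → ℝ)) →ₗ[ℝ] (Fin d → ℝ)) (x : ℕ → ℝ)
    (happrox : ∀ i ∈ Finset.Icc 1 k, ∀ j ∈ Finset.Icc 1 (N - 2 ^ i + 1),
      (1 - ε) * (enormSq (alevel d φ x (i - 1) j) +
          enormSq (alevel d φ x (i - 1) (j + 2 ^ (i - 1)))) ≤ enormSq (alevel d φ x i j) ∧
      enormSq (alevel d φ x i j) ≤
        (1 + ε) * (enormSq (alevel d φ x (i - 1) j) +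
          enormSq (alevel d φ x (i - 1) (j + 2 ^ (i - 1)))))
    (i : ℕ) (hi : i ≤ k) (j : ℕ) (hj : 1 ≤ j) (hjN : j + 2 ^ i ≤ N + 1) :
    (1 - ε) ^ i * windowSq d x i j ≤ enormSq (alevel d φ x i j) ∧
      enormSq (alevel d φ x i j) ≤ (1 + ε) ^ i * windowSq d x i j := by
  induction i generalizing j with
  | zero => simp [enormSq_alevel_zero]
  | succ i ih =>
    rw [pow_succ] at hjN
    obtain ⟨l₁, u₁⟩ := ih (by omega) j hj (by omega)
    obtain ⟨l₂, u₂⟩ := ih (by omega) (j + 2 ^ i) (by omega) (by omega)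
    obtain ⟨l, u⟩ := happrox (i + 1) (Finset.mem_Icc.2 ⟨by omega, hi⟩) j
      (Finset.mem_Icc.2 ⟨hj, by rw [pow_succ]; omega⟩)
    rw [Nat.add_sub_cancel] at l u
    rw [windowSq_succ d x i j hj]
    constructor
    · refine le_trans ?_ l
      rw [pow_succ', mul_assoc, mul_add ((1 - ε) ^ i)]
      exact mul_le_mul_of_nonneg_left (add_le_add l₁ l₂) (by linarith)
    · refine u.trans ?_
      rw [pow_succ', mul_assoc, mul_add ((1 + ε) ^ i)]
      exact mul_le_mul_of_nonneg_left (add_le_add u₁ u₂) (by linarith)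

/-- **Correctness of `AllSketch` (Theorem 5).** With `m = d·2^k`, `d ∣ n`, `n ≥ m` and
`t = (n−m)/d + 1`, if every application of the maps `φᵢ` in the sliding-window recursion
preserves the sum of the squared norms of its two arguments up to a `(1±ε)` factor, then for
every `1 ≤ j ≤ t` the output `vⱼ = v⁽ᵏ⁾ⱼ` satisfies
`(1−ε)^k·‖yⱼ‖² ≤ ‖vⱼ‖² ≤ (1+ε)^k·‖yⱼ‖²`, where
`yⱼ = (x_{1+(j−1)d}, …, x_{m+(j−1)d})` is the `m`-subword of `x` starting at `1+(j−1)d`,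
so that `‖yⱼ‖² = ∑_{i=1}^{m} x_{(j−1)d+i}²`. -/
theorem allSketch_correct (d k n m : ℕ) (hd : 1 ≤ d) (hm : m = d * 2 ^ k)
    (hdvd : d ∣ n) (hnm : m ≤ n)
    (ε : ℝ) (hε0 : 0 < ε) (hε1 : ε < 1)
    (φ : ℕ → ((Fin d → ℝ) × (Fin d → ℝ)) →ₗ[ℝ] (Fin d → ℝ)) (x : ℕ → ℝ)
    (happrox : ∀ i ∈ Finset.Icc 1 k, ∀ j ∈ Finset.Icc 1 (n / d - 2 ^ i + 1),
      (1 - ε) * (enormSq (alevel d φ x (i - 1) j) +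
          enormSq (alevel d φ x (i - 1) (j + 2 ^ (i - 1)))) ≤ enormSq (alevel d φ x i j) ∧
      enormSq (alevel d φ x i j) ≤
        (1 + ε) * (enormSq (alevel d φ x (i - 1) j) +
          enormSq (alevel d φ x (i - 1) (j + 2 ^ (i - 1))))) :
    ∀ j ∈ Finset.Icc 1 ((n - m) / d + 1),
      (1 - ε) ^ k * (∑ i ∈ Finset.range m, x ((j - 1) * d + i + 1) ^ 2) ≤
        enormSq (alevel d φ x k j) ∧
      enormSq (alevel d φ x k j) ≤
        (1 + ε) ^ k * (∑ i ∈ Finset.range m, x ((j - 1) * d + i + 1) ^ 2) := by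
  intro j hj
  obtain ⟨hj1, hj2⟩ := Finset.mem_Icc.1 hj
  obtain ⟨N, rfl⟩ := hdvd
  subst hm
  have hN : 2 ^ k ≤ N := Nat.le_of_mul_le_mul_left hnm hd
  rw [← Nat.mul_sub, Nat.mul_div_cancel_left _ hd] at hj2
  rw [Nat.mul_div_cancel_left _ hd] at happrox
  exact alevel_bounds d k N ε hε0 hε1 φ x happrox k le_rfl j hj1 (by omega)
end

section
/- Let d ≥ 1, K ≥ 0, u = d·2^K, and ε ∈ (0,1). Let f₁ : {0, …, u} → ℝ^u be the unary encoding f₁(a) = 1^a 0^{u−a}. Let φ'₁, …, φ'_K : ℝ^d × ℝ^d → ℝ^d be linear maps, and define linear maps πᵢ : ℝ^{d·2^i} → ℝ^d recursively by π₀ = id and πᵢ(z) = φ'ᵢ(π_{i−1}(z_left), π_{i−1}(z_right)), where z_left and z_right are the first and second halves of z. Fix x, y ∈ {0, …, u} and let w = f₁(x) − f₁(y) ∈ ℝ^u; define the intermediate vectors of the recursion applied to w (i.e. w⁽⁰⁾₁, …, w⁽⁰⁾_{2^K} the d-blocks of w and w⁽ⁱ⁾ⱼ = φ'ᵢ(w⁽ⁱ⁻¹⁾_{2j−1},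 w⁽ⁱ⁻¹⁾_{2j})). Suppose every such application satisfies (1−ε)·(‖w⁽ⁱ⁻¹⁾_{2j−1}‖² + ‖w⁽ⁱ⁻¹⁾_{2j}‖²) ≤ ‖w⁽ⁱ⁾ⱼ‖² ≤ (1+ε)·(‖w⁽ⁱ⁻¹⁾_{2j−1}‖² + ‖w⁽ⁱ⁻¹⁾_{2j}‖²). Then, writing ψ = π_K ∘ f₁, we have (1−ε)^K·|x − y| ≤ ‖ψ(x) − ψ(y)‖² = ‖π_K(w)‖² ≤ (1+ε)^K·|x − y|. -/
/-- The 1-indexed unary encoding `f₁(a) = 1^a 0^{u−a}` of `a ∈ {0,…,u}`, as a function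
`ℕ → ℝ`: position `i` carries `1` iff `1 ≤ i ≤ a`. -/
def unary1 (a : ℕ) : ℕ → ℝ := fun i => if 1 ≤ i ∧ i ≤ a then 1 else 0

/-- The binary tree of compressing linear maps applied blockwise (the unfolding `π` of the
maps `φ'₁, …`): `plevel d φ w 0 j` is the `j`-th consecutive `d`-block of `w` (1-indexed),
and `plevel d φ w i j = φ'ᵢ(w⁽ⁱ⁻¹⁾_{2j−1}, w⁽ⁱ⁻¹⁾_{2j})`; thus
`π_K(w) = plevel d φ w K 1`. -/
def plevel (d : ℕ) (φ : ℕ → ((Fin d → ℝ) × (Fin d → ℝ)) →ₗ[ℝ] (Fin d → ℝ))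
    (w : ℕ → ℝ) : ℕ → ℕ → Fin d → ℝ
  | 0, j => fun r => w (d * (j - 1) + (r : ℕ) + 1)
  | i + 1, j => φ (i + 1) (plevel d φ w i (2 * j - 1), plevel d φ w i (2 * j))

/-- The whole tree `w ↦ w⁽ⁱ⁾ⱼ` is linear in `w`, because it is composed of linear maps. -/
lemma plevel_sub (d : ℕ) (φ : ℕ → ((Fin d → ℝ) × (Fin d → ℝ)) →ₗ[ℝ] (Fin d → ℝ))
    (v w : ℕ → ℝ) (i j : ℕ) :
    plevel d φ v i j - plevel d φ w i j = plevel d φ (fun k => v k - w k) i j := by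
  induction i generalizing j with
  | zero => rfl
  | succ i ih => simp only [plevel, ← ih, ← map_sub, Prod.mk_sub_mk]

/-- The squared norm of the stretch of `d·2^i` coordinates of `w` lying below the node `m + 1`
of level `i`; both `m` and the summation index are 0-based. -/
def blockSq (d : ℕ) (w : ℕ → ℝ) (i m : ℕ) : ℝ :=
  ∑ k ∈ Finset.Ico (d * 2 ^ i * m) (d * 2 ^ i * (m + 1)), w (k + 1) ^ 2

lemma blockSq_zero (d : ℕ) (φ : ℕ → ((Fin d → ℝ) × (Fin d → ℝ)) →ₗ[ℝ] (Fin d → ℝ))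
    (w : ℕ → ℝ) (m : ℕ) : enormSq (plevel d φ w 0 (m + 1)) = blockSq d w 0 m := by
  have h : d * (m + 1) - d * m = d := by rw [mul_add_one, Nat.add_sub_cancel_left]
  simp only [enormSq, plevel, blockSq, pow_zero, mul_one, Nat.add_sub_cancel]
  rw [Finset.sum_Ico_eq_sum_range, h, ← Fin.sum_univ_eq_sum_range (fun k => w (d * m + k + 1) ^ 2)]

lemma blockSq_succ (d : ℕ) (w : ℕ → ℝ) (i m : ℕ) :
    blockSq d w (i + 1) m = blockSq d w i (2 * m) + blockSq d w i (2 * m + 1) := by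
  unfold blockSq
  rw [Finset.sum_Ico_consecutive _ (by gcongr; omega) (by gcongr; omega)]
  congr 2 <;> ring

/-- Each node of level `i` carries the squared norm of the coordinates below it, up to the
distortion accumulated over `i` levels. -/
lemma plevel_bounds (d K : ℕ) (ε : ℝ) (hε0 : 0 < ε) (hε1 : ε < 1)
    (φ : ℕ → ((Fin d → ℝ) × (Fin d → ℝ)) →ₗ[ℝ] (Fin d → ℝ)) (w : ℕ → ℝ)
    (happrox : ∀ i ∈ Finset.Icc 1 K, ∀ j ∈ Finset.Icc 1 (2 ^ (K - i)),
      (1 - ε) * (enormSq (plevel d φ w (i - 1) (2 * j - 1)) +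
          enormSq (plevel d φ w (i - 1) (2 * j))) ≤ enormSq (plevel d φ w i j) ∧
      enormSq (plevel d φ w i j) ≤
        (1 + ε) * (enormSq (plevel d φ w (i - 1) (2 * j - 1)) +
          enormSq (plevel d φ w (i - 1) (2 * j))))
    (i m : ℕ) (hi : i ≤ K) (hm : m < 2 ^ (K - i)) :
    (1 - ε) ^ i * blockSq d w i m ≤ enormSq (plevel d φ w i (m + 1)) ∧
    enormSq (plevel d φ w i (m + 1)) ≤ (1 + ε) ^ i * blockSq d w i m := by
  induction i generalizing m with
  | zero => simp [blockSq_zero]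
  | succ i ih =>
    have hpow : 2 ^ (K - i) = 2 * 2 ^ (K - (i + 1)) := by
      rw [← pow_succ']; congr 1; omega
    obtain ⟨l1, u1⟩ := ih (2 * m) (by omega) (by omega)
    obtain ⟨l2, u2⟩ := ih (2 * m + 1) (by omega) (by omega)
    obtain ⟨l, r⟩ := happrox (i + 1) (Finset.mem_Icc.2 ⟨by omega, hi⟩) (m + 1)
      (Finset.mem_Icc.2 ⟨by omega, hm⟩)
    rw [Nat.add_sub_cancel, show 2 * (m + 1) - 1 = 2 * m + 1 by omega,
      show 2 * (m + 1) = 2 * m + 1 + 1 by omega] at l r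
    rw [blockSq_succ]
    constructor
    · refine le_trans ?_ l
      rw [pow_succ', mul_assoc]
      exact mul_le_mul_of_nonneg_left (by linarith) (by linarith)
    · refine r.trans ?_
      rw [pow_succ', mul_assoc]
      exact mul_le_mul_of_nonneg_left (by linarith) (by linarith)

lemma sum_unary1 (u a : ℕ) (ha : a ≤ u) : ∑ k ∈ Finset.range u, unary1 a (k + 1) = a := by
  have h : (Finset.range u).filter (fun k => 1 ≤ k + 1 ∧ k + 1 ≤ a) = Finset.range a := by
    ext k; simp only [Finset.mem_filter, Finset.mem_range]; omega
  simp only [unary1]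
  rw [Finset.sum_boole, h, Finset.card_range]

/-- The unary encoding turns `ℓ₁` distance into squared Euclidean distance. -/
lemma sum_unary1_sub_sq (u x y : ℕ) (hx : x ≤ u) (hy : y ≤ u) :
    ∑ k ∈ Finset.range u, (unary1 x (k + 1) - unary1 y (k + 1)) ^ 2 = |(x : ℝ) - y| := by
  wlog hxy : y ≤ x generalizing x y
  · rw [abs_sub_comm, ← this y x hy hx (by omega)]
    exact Finset.sum_congr rfl fun k _ => by ring
  -- For `y ≤ x` the difference is an indicator, hence equal to its square.
  have h (k : ℕ) : (unary1 x (k + 1) - unary1 y (k + 1)) ^ 2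
      = unary1 x (k + 1) - unary1 y (k + 1) := by
    unfold unary1
    split_ifs <;> first | omega | norm_num
  have hxy' : (y : ℝ) ≤ x := by exact_mod_cast hxy
  simp only [h]
  rw [Finset.sum_sub_distrib, sum_unary1 u x hx, sum_unary1 u y hy,
    abs_of_nonneg (by linarith)]

/-- **Approximate embedding of `ℓ₁` over `{0,…,u}` into `ℓ₂²` (Lemma 8's core guarantee).**
Let `u = d·2^K`, fix `x, y ∈ {0,…,u}` and let `w = f₁(x) − f₁(y)`. If every application of
the linear maps `φ'ᵢ` in the binary compression tree applied to `w` preserves the sum of the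
squared norms of its two arguments up to a `(1±ε)` factor, then, writing `ψ = π_K ∘ f₁`,
`ψ(x) − ψ(y) = π_K(w)` and `(1−ε)^K·|x − y| ≤ ‖ψ(x) − ψ(y)‖² = ‖π_K(w)‖² ≤ (1+ε)^K·|x − y|`. -/
theorem l1_embedding (d K u : ℕ) (hd : 1 ≤ d) (hu : u = d * 2 ^ K)
    (ε : ℝ) (hε0 : 0 < ε) (hε1 : ε < 1)
    (φ : ℕ → ((Fin d → ℝ) × (Fin d → ℝ)) →ₗ[ℝ] (Fin d → ℝ))
    (x y : ℕ) (hx : x ≤ u) (hy : y ≤ u)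
    (w : ℕ → ℝ) (hw : w = fun i => unary1 x i - unary1 y i)
    (happrox : ∀ i ∈ Finset.Icc 1 K, ∀ j ∈ Finset.Icc 1 (2 ^ (K - i)),
      (1 - ε) * (enormSq (plevel d φ w (i - 1) (2 * j - 1)) +
          enormSq (plevel d φ w (i - 1) (2 * j))) ≤ enormSq (plevel d φ w i j) ∧
      enormSq (plevel d φ w i j) ≤
        (1 + ε) * (enormSq (plevel d φ w (i - 1) (2 * j - 1)) +
          enormSq (plevel d φ w (i - 1) (2 * j)))) :
    plevel d φ (unary1 x) K 1 - plevel d φ (unary1 y) K 1 = plevel d φ w K 1 ∧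
    (1 - ε) ^ K * |(x : ℝ) - (y : ℝ)| ≤ enormSq (plevel d φ w K 1) ∧
    enormSq (plevel d φ w K 1) ≤ (1 + ε) ^ K * |(x : ℝ) - (y : ℝ)| := by
  have hS : blockSq d w K 0 = |(x : ℝ) - y| := by
    rw [← sum_unary1_sub_sq u x y hx hy, hw, hu]
    simp [blockSq]
  refine ⟨by rw [hw, plevel_sub], ?_⟩
  rw [← hS]
  exact plevel_bounds d K ε hε0 hε1 φ w happrox K 0 le_rfl (by positivity)
end
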